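/- Let w : ℕ → ℝ be a sequence of nonnegative reals and 𝕜 = ℝ or ℂ. Let a, A ∈ 𝕜 with Re(conj(a)·A) > 0, and let x, y : ℕ → 𝕜 be such that Σᵢ wᵢ·|xᵢ|² and Σᵢ wᵢ·|yᵢ|² are finite (summable). If Σᵢ wᵢ·Re[(A·yᵢ − xᵢ)·(conj(xᵢ) − conj(a)·conj(yᵢ))] ≥ 0, then (Σᵢ wᵢ·|xᵢ|² · Σᵢ wᵢ·|yᵢ|²)^(1/2) ≤ (1/2)·(Σᵢ wᵢ·Re[A·conj(xᵢ)·yᵢ + conj(a)·xᵢ·conj(yᵢ)]) / (Re(conj(a)·A))^(1/2) ≤ (1/2)·(|A| + |a|)/(Re(conj(a)·A))^(1/2) · |Σᵢ wᵢ·xᵢ·conj(yᵢ)|. -/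

import Mathlib

open RCLike ComplexConjugate

/-!
Weighting by `√(w i)` turns the three sums into norms and inner products in `ℓ²`. In any inner
product space, `re ⟪x - a • y, A • y - x⟫ ≥ 0` expands to
`‖x‖² + re (conj a * A) * ‖y‖² ≤ re (A * ⟪x, y⟫ + conj a * ⟪y, x⟫)`. The left-hand side is at least
`2 * √(re (conj a * A)) * ‖x‖ * ‖y‖` by AM-GM, and the right-hand side is at most
`(‖A‖ + ‖a‖) * ‖⟪y, x⟫‖` by the triangle inequality.
-/

section InnerProductSpace

open scoped InnerProductSpace

variable {𝕜 E : Type*} [RCLike 𝕜] [SeminormedAddCommGroup E] [InnerProductSpace 𝕜 E]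

theorem re_inner_sub_smul_smul_sub (a A : 𝕜) (x y : E) :
    re ⟪x - a • y, A • y - x⟫_𝕜 =
      re (A * ⟪x, y⟫_𝕜 + conj a * ⟪y, x⟫_𝕜) - (‖x‖ ^ 2 + re (conj a * A) * ‖y‖ ^ 2) := by
  have re_mul_inner_self : re (conj a * A * ⟪y, y⟫_𝕜) = re (conj a * A) * ‖y‖ ^ 2 := by
    rw [inner_self_eq_norm_sq_to_K, ← ofReal_pow, re_mul_ofReal]
  simp only [inner_sub_left, inner_sub_right, inner_smul_left, inner_smul_right, mul_sub,
    ← mul_assoc, map_sub, map_add, re_mul_inner_self, inner_self_eq_norm_sq, mul_comm A (conj a)]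
  ring

theorem sqrt_re_mul_norm_mul_norm_le_of_re_inner_nonneg {a A : 𝕜} (ha : 0 ≤ re (conj a * A))
    {x y : E} (h : 0 ≤ re ⟪x - a • y, A • y - x⟫_𝕜) :
    √(re (conj a * A)) * (‖x‖ * ‖y‖) ≤ 1 / 2 * re (A * ⟪x, y⟫_𝕜 + conj a * ⟪y, x⟫_𝕜) := by
  rw [re_inner_sub_smul_smul_sub, sub_nonneg] at h
  have amgm := two_mul_le_add_sq ‖x‖ (√(re (conj a * A)) * ‖y‖)
  rw [mul_pow, Real.sq_sqrt ha] at amgm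
  linarith

theorem re_mul_inner_add_conj_mul_inner_le (a A : 𝕜) (x y : E) :
    re (A * ⟪x, y⟫_𝕜 + conj a * ⟪y, x⟫_𝕜) ≤ (‖A‖ + ‖a‖) * ‖⟪y, x⟫_𝕜‖ :=
  calc re (A * ⟪x, y⟫_𝕜 + conj a * ⟪y, x⟫_𝕜)
      ≤ ‖A * ⟪x, y⟫_𝕜 + conj a * ⟪y, x⟫_𝕜‖ := re_le_norm _
    _ ≤ ‖A * ⟪x, y⟫_𝕜‖ + ‖conj a * ⟪y, x⟫_𝕜‖ := norm_add_le _ _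
    _ = (‖A‖ + ‖a‖) * ‖⟪y, x⟫_𝕜‖ := by
      rw [norm_mul, norm_mul, norm_conj, norm_inner_symm x y, add_mul]

theorem inner_sqrt_smul_sqrt_smul {r : ℝ} (hr : 0 ≤ r) (x y : E) :
    ⟪(√r : 𝕜) • x, (√r : 𝕜) • y⟫_𝕜 = r * ⟪x, y⟫_𝕜 := by
  rw [inner_smul_left, inner_smul_right, conj_ofReal, ← mul_assoc, ← ofReal_mul,
    Real.mul_self_sqrt hr]

end InnerProductSpace

section WeightedFamily

open scoped InnerProductSpace

variable {ι 𝕜 E : Type*} [RCLike 𝕜] [NormedAddCommGroup E] {w : ι → ℝ}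

theorem memℓp_two_sqrt_smul [NormedSpace 𝕜 E] (hw : ∀ i, 0 ≤ w i) {x : ι → E}
    (hx : Summable fun i => w i * ‖x i‖ ^ 2) :
    Memℓp (fun i => (√(w i) : 𝕜) • x i) 2 := by
  refine memℓp_gen (hx.congr fun i => ?_)
  rw [ENNReal.toReal_ofNat, Real.rpow_two, norm_smul, norm_ofReal, mul_pow, sq_abs,
    Real.sq_sqrt (hw i)]

variable (𝕜) in
/-- The image in the unweighted space `ℓ²` of a family `x` in the `ℓ²` space with weights `w`,
under the isometry that multiplies the `i`-th entry by `√(w i)`. -/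
noncomputable def weightedToL2 [NormedSpace 𝕜 E] (hw : ∀ i, 0 ≤ w i) {x : ι → E}
    (hx : Summable fun i => w i * ‖x i‖ ^ 2) : lp (fun _ : ι => E) 2 :=
  ⟨fun i => (√(w i) : 𝕜) • x i, memℓp_two_sqrt_smul hw hx⟩

variable [InnerProductSpace 𝕜 E]

namespace weightedToL2

variable {x y : ι → E} (hw : ∀ i, 0 ≤ w i) (hx : Summable fun i => w i * ‖x i‖ ^ 2)
  (hy : Summable fun i => w i * ‖y i‖ ^ 2)

theorem coe_apply (i : ι) : weightedToL2 𝕜 hw hx i = (√(w i) : 𝕜) • x i := rfl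

theorem hasSum_inner :
    HasSum (fun i => (w i : 𝕜) * ⟪x i, y i⟫_𝕜) ⟪weightedToL2 𝕜 hw hx, weightedToL2 𝕜 hw hy⟫_𝕜 := by
  simpa only [coe_apply, inner_sqrt_smul_sqrt_smul (hw _)] using
    lp.hasSum_inner (𝕜 := 𝕜) (weightedToL2 𝕜 hw hx) (weightedToL2 𝕜 hw hy)

theorem hasSum_norm_sq : HasSum (fun i => w i * ‖x i‖ ^ 2) (‖weightedToL2 𝕜 hw hx‖ ^ 2) := by
  simpa only [re_ofReal_mul, inner_self_eq_norm_sq] using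
    hasSum_re 𝕜 (hasSum_inner (𝕜 := 𝕜) hw hx hx)

theorem hasSum_re_mul_inner_add_mul_inner (b c : 𝕜) :
    HasSum (fun i => w i * re (b * ⟪x i, y i⟫_𝕜 + c * ⟪y i, x i⟫_𝕜))
      (re (b * ⟪weightedToL2 𝕜 hw hx, weightedToL2 𝕜 hw hy⟫_𝕜 +
        c * ⟪weightedToL2 𝕜 hw hy, weightedToL2 𝕜 hw hx⟫_𝕜)) := by
  simpa only [mul_left_comm _ (ofReal _ : 𝕜), ← mul_add, re_ofReal_mul] using
    hasSum_re 𝕜 (((hasSum_inner hw hx hy).mul_left b).add ((hasSum_inner hw hy hx).mul_left c))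

theorem hasSum_re_inner_sub_smul_smul_sub (a A : 𝕜) :
    HasSum (fun i => w i * re ⟪x i - a • y i, A • y i - x i⟫_𝕜)
      (re ⟪weightedToL2 𝕜 hw hx - a • weightedToL2 𝕜 hw hy,
        A • weightedToL2 𝕜 hw hy - weightedToL2 𝕜 hw hx⟫_𝕜) := by
  simp only [re_inner_sub_smul_smul_sub, mul_sub, mul_add, mul_left_comm (w _) (re (conj a * A))]
  exact (hasSum_re_mul_inner_add_mul_inner hw hx hy A (conj a)).sub
    ((hasSum_norm_sq hw hx).add ((hasSum_norm_sq hw hy).mul_left _))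

end weightedToL2

theorem weighted_sequence_reverse_schwarz_general (hw : ∀ i, 0 ≤ w i) {a A : 𝕜}
    (ha : 0 < re (conj a * A)) {x y : ι → E}
    (hx : Summable fun i => w i * ‖x i‖ ^ 2) (hy : Summable fun i => w i * ‖y i‖ ^ 2)
    (h : 0 ≤ ∑' i, w i * re ⟪x i - a • y i, A • y i - x i⟫_𝕜) :
    √((∑' i, w i * ‖x i‖ ^ 2) * (∑' i, w i * ‖y i‖ ^ 2)) ≤
        1 / 2 * (∑' i, w i * re (A * ⟪x i, y i⟫_𝕜 + conj a * ⟪y i, x i⟫_𝕜)) /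
          √(re (conj a * A)) ∧
      1 / 2 * (∑' i, w i * re (A * ⟪x i, y i⟫_𝕜 + conj a * ⟪y i, x i⟫_𝕜)) /
          √(re (conj a * A)) ≤
        1 / 2 * ((‖A‖ + ‖a‖) / √(re (conj a * A))) * ‖∑' i, (w i : 𝕜) * ⟪y i, x i⟫_𝕜‖ := by
  rw [(weightedToL2.hasSum_re_inner_sub_smul_smul_sub hw hx hy a A).tsum_eq] at h
  rw [(weightedToL2.hasSum_norm_sq (𝕜 := 𝕜) hw hx).tsum_eq,
    (weightedToL2.hasSum_norm_sq (𝕜 := 𝕜) hw hy).tsum_eq,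
    (weightedToL2.hasSum_re_mul_inner_add_mul_inner hw hx hy A (conj a)).tsum_eq,
    (weightedToL2.hasSum_inner hw hy hx).tsum_eq, ← mul_pow, Real.sqrt_sq (by positivity)]
  constructor
  · rw [le_div_iff₀' (Real.sqrt_pos.2 ha)]
    exact sqrt_re_mul_norm_mul_norm_le_of_re_inner_nonneg ha.le h
  · rw [mul_div_assoc, mul_assoc, div_mul_eq_mul_div (‖A‖ + ‖a‖)]
    gcongr
    exact re_mul_inner_add_conj_mul_inner_le a A _ _

end WeightedFamily

/-- Proposition 5.1: counterpart of the weighted Cauchy–Bunyakovsky–Schwarz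
inequality for sequences. -/
theorem weighted_sequence_reverse_schwarz {𝕜 : Type*} [RCLike 𝕜]
    (w : ℕ → ℝ) (hw : ∀ i, 0 ≤ w i) (a A : 𝕜) (ha : 0 < re (conj a * A))
    (x y : ℕ → 𝕜)
    (hx : Summable fun i => w i * ‖x i‖ ^ 2) (hy : Summable fun i => w i * ‖y i‖ ^ 2)
    (h : 0 ≤ ∑' i, w i * re ((A * y i - x i) * (conj (x i) - conj a * conj (y i)))) :
    Real.sqrt ((∑' i, w i * ‖x i‖ ^ 2) * (∑' i, w i * ‖y i‖ ^ 2)) ≤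
        1 / 2 * (∑' i, w i * re (A * conj (x i) * y i + conj a * x i * conj (y i))) /
          Real.sqrt (re (conj a * A)) ∧
      1 / 2 * (∑' i, w i * re (A * conj (x i) * y i + conj a * x i * conj (y i))) /
          Real.sqrt (re (conj a * A)) ≤
        1 / 2 * ((‖A‖ + ‖a‖) / Real.sqrt (re (conj a * A))) *
          ‖∑' i, (w i : 𝕜) * x i * conj (y i)‖ := by
  simp only [← map_mul, ← map_sub] at h
  simpa only [inner_apply', inner_apply, mul_assoc, mul_comm (conj (y _)), smul_eq_mul] using
    weighted_sequence_reverse_schwarz_general hw ha hx hy h
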